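/- Let V be a type and μ : V → V → ℕ a matrix with zero diagonal (a directed multigraph), and let v, w ∈ V with v ≠ w. Then (μ↑v)↑w ≠ (μ↑w)↑v if and only if μ v w · μ w v ≠ 0 and there exist x, y ∈ V with x ≠ y and x, y ∉ {v, w} such that μ x v · μ v y ≠ μ x w · μ w y. -/

import Mathlib

/-- The detour of a directed multigraph `μ : V → V → ℕ` (a matrix with zero diagonal,
counting arcs) at a vertex `v`. -/
def mdetour {V : Type*} [DecidableEq V] (μ : V → V → ℕ) (v : V) : V → V → ℕ :=
  fun x y => if x = v ∨ y = v ∨ x = y then 0 else μ x y + μ x v * μ v y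

/-!
An entry of `(μ↑v)↑w` between distinct `x, y ∉ {v, w}` counts the simple paths from `x` to `y` with
interior in `{v, w}`, together with the walks `x → v → w → v → y`. The first count is symmetric in
`v` and `w`, so swapping the two detours only exchanges the walks `x → v → w → v → y` for the walks
`x → w → v → w → y`: the entries agree iff
`(μ v w · μ w v) · (μ x v · μ v y) = (μ v w · μ w v) · (μ x w · μ w y)`.
-/

section Detour

variable {V : Type*}

/-- The number of simple paths from `x` to `y` in the multigraph `μ` whose interior vertices lie in
`{v, w}`, when `v, w, x, y` are distinct: the part of the iterated detour at `v` and `w` that does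
not depend on their order. -/
def pathCountVia (μ : V → V → ℕ) (v w x y : V) : ℕ :=
  μ x y + μ x v * μ v y + μ x w * μ w y + μ x v * μ v w * μ w y + μ x w * μ w v * μ v y

theorem pathCountVia_comm (μ : V → V → ℕ) (v w x y : V) :
    pathCountVia μ v w x y = pathCountVia μ w v x y := by
  unfold pathCountVia
  ring

variable [DecidableEq V] {μ : V → V → ℕ} {v w x y : V}

theorem mdetour_apply_of_ne (hxv : x ≠ v) (hyv : y ≠ v) (hxy : x ≠ y) :
    mdetour μ v x y = μ x y + μ x v * μ v y :=
  if_neg (by simp [hxv, hyv, hxy])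

theorem mdetour_mdetour_apply_eq_zero (h : x = y ∨ x = v ∨ x = w ∨ y = v ∨ y = w) :
    mdetour (mdetour μ v) w x y = 0 := by
  rcases h with rfl | rfl | rfl | rfl | rfl <;> simp [mdetour]

theorem mdetour_mdetour_apply_of_ne (hvw : v ≠ w) (hxy : x ≠ y)
    (hxv : x ≠ v) (hxw : x ≠ w) (hyv : y ≠ v) (hyw : y ≠ w) :
    mdetour (mdetour μ v) w x y =
      pathCountVia μ v w x y + μ v w * μ w v * (μ x v * μ v y) := by
  calc mdetour (mdetour μ v) w x y
      = mdetour μ v x y + mdetour μ v x w * mdetour μ v w y := mdetour_apply_of_ne hxw hyw hxy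
    _ = μ x y + μ x v * μ v y + (μ x w + μ x v * μ v w) * (μ w y + μ w v * μ v y) := by
      rw [mdetour_apply_of_ne hxv hyv hxy, mdetour_apply_of_ne hxv hvw.symm hxw,
        mdetour_apply_of_ne hvw.symm hyv hyw.symm]
    _ = pathCountVia μ v w x y + μ v w * μ w v * (μ x v * μ v y) := by
      unfold pathCountVia
      ring

theorem mdetour_mdetour_apply_comm_iff (hvw : v ≠ w) (hxy : x ≠ y)
    (hxv : x ≠ v) (hxw : x ≠ w) (hyv : y ≠ v) (hyw : y ≠ w) :
    mdetour (mdetour μ v) w x y = mdetour (mdetour μ w) v x y ↔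
      μ v w * μ w v = 0 ∨ μ x v * μ v y = μ x w * μ w y := by
  rw [mdetour_mdetour_apply_of_ne hvw hxy hxv hxw hyv hyw,
    mdetour_mdetour_apply_of_ne hvw.symm hxy hxw hxv hyw hyv,
    pathCountVia_comm μ w v, mul_comm (μ w v), add_right_inj, mul_eq_mul_left_iff, or_comm]

theorem mdetour_mdetour_comm_iff (hvw : v ≠ w) :
    mdetour (mdetour μ v) w = mdetour (mdetour μ w) v ↔
      ∀ x y, x ≠ y → x ≠ v → x ≠ w → y ≠ v → y ≠ w →
        μ v w * μ w v = 0 ∨ μ x v * μ v y = μ x w * μ w y := by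
  constructor
  · intro hcomm x y hxy hxv hxw hyv hyw
    exact (mdetour_mdetour_apply_comm_iff hvw hxy hxv hxw hyv hyw).mp (by rw [hcomm])
  · intro h
    ext x y
    by_cases hdeg : x = y ∨ x = v ∨ x = w ∨ y = v ∨ y = w
    · rw [mdetour_mdetour_apply_eq_zero hdeg, mdetour_mdetour_apply_eq_zero (by tauto)]
    · simp only [not_or] at hdeg
      obtain ⟨hxy, hxv, hxw, hyv, hyw⟩ := hdeg
      exact (mdetour_mdetour_apply_comm_iff hvw hxy hxv hxw hyv hyw).mpr
        (h x y hxy hxv hxw hyv hyw)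

end Detour

/-- For a directed multigraph, `(μ↑v)↑w ≠ (μ↑w)↑v` iff `μ v w · μ w v ≠ 0` and there
exist `x ≠ y` outside `{v, w}` with `μ x v · μ v y ≠ μ x w · μ w y`. -/
theorem multigraph_detour_noncomm_iff {V : Type*} [DecidableEq V]
    (μ : V → V → ℕ) (hdiag : ∀ x, μ x x = 0) (v w : V) (hvw : v ≠ w) :
    mdetour (mdetour μ v) w ≠ mdetour (mdetour μ w) v ↔
      μ v w * μ w v ≠ 0 ∧
        ∃ x y, x ≠ y ∧ x ≠ v ∧ x ≠ w ∧ y ≠ v ∧ y ≠ w ∧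
          μ x v * μ v y ≠ μ x w * μ w y := by
  rw [Ne, mdetour_mdetour_comm_iff hvw]
  push Not
  constructor
  · rintro ⟨x, y, hxy, hxv, hxw, hyv, hyw, hback, hne⟩
    exact ⟨hback, x, y, hxy, hxv, hxw, hyv, hyw, hne⟩
  · rintro ⟨hback, x, y, hxy, hxv, hxw, hyv, hyw, hne⟩
    exact ⟨x, y, hxy, hxv, hxw, hyv, hyw, hback, hne⟩
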